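/- arXiv:1806.01234 — 4 statements merged into one kernel-verified Lean document; each statement's English description precedes it below -/
import Mathlib

section
/- Let Γ ⊆ [0,1] be a set of real numbers. Then 𝕊(𝕊(Γ)) = 𝕊(Γ); that is, the operation Γ ↦ 𝕊(Γ) is idempotent on subsets of [0,1]. -/
/-- The set 𝕊(Γ) of the paper: `{1}` together with all real numbers
`s ≤ 1` of the form `1 - 1/m + (1/m) * ∑ r_j * γ_j` with `m` a positive
integer, `r_j` nonnegative integers and `γ_j ∈ Γ`. -/
def Sset (Γ : Set ℝ) : Set ℝ :=
  {1} ∪ {s : ℝ | s ≤ 1 ∧ ∃ (m : ℕ), 0 < m ∧ ∃ (k : ℕ) (r : Fin k → ℕ) (γ : Fin k → ℝ),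
    (∀ j, γ j ∈ Γ) ∧ s = 1 - 1 / (m : ℝ) + (1 / (m : ℝ)) * ∑ j, (r j : ℝ) * γ j}

/-!
Every element of `𝕊(Γ)` other than `1` has the form `1 - (1 - σ)/m` with `σ` in the additive monoid
generated by `Γ`, and iterating `σ ↦ 1 - (1 - σ)/m` multiplies the denominators `m`. So everything
reduces to showing that `𝕊(Γ)` is closed under those sums that stay at most `1`. A summand with
`m = 1` is itself in the monoid and can be absorbed into the other one, since
`σ + (1 - (1 - τ)/n) = 1 - (1 - (nσ + τ))/n`; the remaining summands (`m ≥ 2`, or the element `1`)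
are at least `1/2`, and two of these can only add up to `1`.
-/

/-- The coefficient `1 - 1/m + σ/m` which adjunction attaches to a positive integer `m` and a sum
`σ` of coefficients, written so that its defect from `1` is the defect of `σ` divided by `m`. The
value at `m = 0` is the junk value `1`. -/
noncomputable def adjunctionCoeff (m : ℕ) (σ : ℝ) : ℝ :=
  1 - (1 - σ) / m

theorem adjunctionCoeff_one_left (σ : ℝ) : adjunctionCoeff 1 σ = σ := by
  simp [adjunctionCoeff]

theorem adjunctionCoeff_one_right (m : ℕ) : adjunctionCoeff m 1 = 1 := by
  simp [adjunctionCoeff]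

theorem adjunctionCoeff_adjunctionCoeff (m n : ℕ) (σ : ℝ) :
    adjunctionCoeff m (adjunctionCoeff n σ) = adjunctionCoeff (m * n) σ := by
  simp [adjunctionCoeff, div_div, mul_comm]

theorem add_adjunctionCoeff {n : ℕ} (hn : 0 < n) (σ τ : ℝ) :
    σ + adjunctionCoeff n τ = adjunctionCoeff n (n • σ + τ) := by
  simp only [adjunctionCoeff, nsmul_eq_mul]
  field_simp
  ring

theorem adjunctionCoeff_le_one_iff {m : ℕ} (hm : 0 < m) {σ : ℝ} :
    adjunctionCoeff m σ ≤ 1 ↔ σ ≤ 1 := by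
  have hm0 : (0 : ℝ) < m := Nat.cast_pos.2 hm
  rw [adjunctionCoeff, sub_le_self_iff, le_div_iff₀ hm0, zero_mul, sub_nonneg]

theorem one_sub_inv_le_adjunctionCoeff (m : ℕ) {σ : ℝ} (hσ : 0 ≤ σ) :
    1 - (m : ℝ)⁻¹ ≤ adjunctionCoeff m σ := by
  rw [adjunctionCoeff, inv_eq_one_div]
  gcongr
  exact sub_le_self 1 hσ

theorem adjunctionCoeff_nonneg (m : ℕ) {σ : ℝ} (hσ : 0 ≤ σ) : 0 ≤ adjunctionCoeff m σ :=
  (sub_nonneg.2 m.cast_inv_le_one).trans (one_sub_inv_le_adjunctionCoeff m hσ)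

theorem half_le_adjunctionCoeff {m : ℕ} (hm : 2 ≤ m) {σ : ℝ} (hσ : 0 ≤ σ) :
    1 / 2 ≤ adjunctionCoeff m σ := by
  have inv_le_half : (m : ℝ)⁻¹ ≤ 2⁻¹ := inv_anti₀ two_pos (by exact_mod_cast hm)
  linarith [one_sub_inv_le_adjunctionCoeff m hσ]

section OrderedAddMonoid

variable {M : Type*} [AddCommMonoid M] [Preorder M] [IsOrderedAddMonoid M] {T : Set M}

theorem nonneg_of_mem_addSubmonoidClosure (hT : T ⊆ Set.Ici 0) {x : M}
    (hx : x ∈ AddSubmonoid.closure T) : 0 ≤ x :=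
  (AddSubmonoid.closure_le (S := AddSubmonoid.nonneg M)).2 hT hx

theorem mem_of_mem_addSubmonoidClosure_of_le {c : M} (hT : T ⊆ Set.Ici 0) (zero_mem : 0 ∈ T)
    (add_mem : ∀ a ∈ T, ∀ b ∈ T, a + b ≤ c → a + b ∈ T) {x : M}
    (hx : x ∈ AddSubmonoid.closure T) (hxc : x ≤ c) : x ∈ T := by
  induction hx using AddSubmonoid.closure_induction with
  | mem x hx => exact hx
  | zero => exact zero_mem
  | add x y hx hy ihx ihy =>
    have hx0 : 0 ≤ x := nonneg_of_mem_addSubmonoidClosure hT hx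
    have hy0 : 0 ≤ y := nonneg_of_mem_addSubmonoidClosure hT hy
    exact add_mem x (ihx ((le_add_of_nonneg_right hy0).trans hxc))
      y (ihy ((le_add_of_nonneg_left hx0).trans hxc)) hxc

end OrderedAddMonoid

theorem mem_addSubmonoidClosure_iff_exists_fin_sum {M : Type*} [AddCommMonoid M] {T : Set M}
    {x : M} :
    x ∈ AddSubmonoid.closure T ↔ ∃ (k : ℕ) (r : Fin k → ℕ) (γ : Fin k → M),
      (∀ j, γ j ∈ T) ∧ x = ∑ j, r j • γ j := by
  rw [← Submodule.span_nat_eq_addSubmonoidClosure, Submodule.mem_toAddSubmonoid,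
    Submodule.mem_span_set']
  constructor
  · rintro ⟨k, r, γ, rfl⟩
    exact ⟨k, r, fun j => γ j, fun j => (γ j).2, rfl⟩
  · rintro ⟨k, r, γ, hγ, rfl⟩
    exact ⟨k, r, fun j => ⟨γ j, hγ j⟩, rfl⟩

section Sset

variable {Γ : Set ℝ}

theorem mem_Sset_iff {s : ℝ} :
    s ∈ Sset Γ ↔ s = 1 ∨ ∃ m : ℕ, 0 < m ∧ ∃ σ ∈ AddSubmonoid.closure Γ,
      σ ≤ 1 ∧ s = adjunctionCoeff m σ := by
  have coeff_eq (m : ℕ) (σ : ℝ) : 1 - 1 / (m : ℝ) + 1 / (m : ℝ) * σ = adjunctionCoeff m σ := by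
    rw [adjunctionCoeff]
    ring
  simp only [Sset, Set.mem_union, Set.mem_singleton_iff, Set.mem_ofPred_eq, coeff_eq,
    mem_addSubmonoidClosure_iff_exists_fin_sum, nsmul_eq_mul]
  refine or_congr_right ⟨?_, ?_⟩
  · rintro ⟨hs, m, hm, k, r, γ, hγ, rfl⟩
    exact ⟨m, hm, _, ⟨k, r, γ, hγ, rfl⟩, (adjunctionCoeff_le_one_iff hm).1 hs, rfl⟩
  · rintro ⟨m, hm, _, ⟨k, r, γ, hγ, rfl⟩, hσ, rfl⟩
    exact ⟨(adjunctionCoeff_le_one_iff hm).2 hσ, m, hm, k, r, γ, hγ, rfl⟩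

theorem one_mem_Sset : 1 ∈ Sset Γ :=
  Or.inl rfl

theorem le_one_of_mem_Sset {s : ℝ} (hs : s ∈ Sset Γ) : s ≤ 1 := by
  obtain rfl | ⟨hs1, -⟩ := hs
  exacts [le_rfl, hs1]

theorem mem_Sset_of_mem_closure {σ : ℝ} (hσ : σ ∈ AddSubmonoid.closure Γ) (hσ1 : σ ≤ 1) :
    σ ∈ Sset Γ :=
  mem_Sset_iff.2 (Or.inr ⟨1, one_pos, σ, hσ, hσ1, (adjunctionCoeff_one_left σ).symm⟩)

theorem subset_Sset (hΓ : Γ ⊆ Set.Iic 1) : Γ ⊆ Sset Γ := fun _ hγ =>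
  mem_Sset_of_mem_closure (AddSubmonoid.subset_closure hγ) (hΓ hγ)

theorem adjunctionCoeff_mem_Sset {m : ℕ} (hm : 0 < m) {s : ℝ} (hs : s ∈ Sset Γ) :
    adjunctionCoeff m s ∈ Sset Γ := by
  obtain rfl | ⟨n, hn, σ, hσ, hσ1, rfl⟩ := mem_Sset_iff.1 hs
  · rw [adjunctionCoeff_one_right]
    exact one_mem_Sset
  · exact mem_Sset_iff.2
      (Or.inr ⟨m * n, Nat.mul_pos hm hn, σ, hσ, hσ1, adjunctionCoeff_adjunctionCoeff m n σ⟩)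

theorem Sset_subset_Ici_zero (hΓ : Γ ⊆ Set.Ici 0) : Sset Γ ⊆ Set.Ici 0 := by
  intro s hs
  obtain rfl | ⟨m, -, σ, hσ, -, rfl⟩ := mem_Sset_iff.1 hs
  · exact zero_le_one' ℝ
  · exact adjunctionCoeff_nonneg m (nonneg_of_mem_addSubmonoidClosure hΓ hσ)

theorem mem_closure_or_half_le_of_mem_Sset (hΓ : Γ ⊆ Set.Ici 0) {s : ℝ} (hs : s ∈ Sset Γ) :
    s ∈ AddSubmonoid.closure Γ ∨ 1 / 2 ≤ s := by
  obtain rfl | ⟨m, hm, σ, hσ, -, rfl⟩ := mem_Sset_iff.1 hs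
  · exact Or.inr one_half_lt_one.le
  obtain rfl | hm2 : m = 1 ∨ 2 ≤ m := by omega
  · exact Or.inl (by rwa [adjunctionCoeff_one_left])
  · exact Or.inr (half_le_adjunctionCoeff hm2 (nonneg_of_mem_addSubmonoidClosure hΓ hσ))

theorem add_mem_Sset_of_mem_closure (hΓ : Γ ⊆ Set.Ici 0) {σ s : ℝ}
    (hσ : σ ∈ AddSubmonoid.closure Γ) (hs : s ∈ Sset Γ) (hσs : σ + s ≤ 1) : σ + s ∈ Sset Γ := by
  obtain rfl | ⟨n, hn, τ, hτ, -, rfl⟩ := mem_Sset_iff.1 hs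
  · have hσ0 : 0 ≤ σ := nonneg_of_mem_addSubmonoidClosure hΓ hσ
    exact mem_Sset_iff.2 (Or.inl (hσs.antisymm (le_add_of_nonneg_left hσ0)))
  · rw [add_adjunctionCoeff hn] at hσs ⊢
    exact mem_Sset_iff.2 (Or.inr ⟨n, hn, n • σ + τ, add_mem (nsmul_mem hσ n) hτ,
      (adjunctionCoeff_le_one_iff hn).1 hσs, rfl⟩)

theorem add_mem_Sset (hΓ : Γ ⊆ Set.Ici 0) {a b : ℝ} (ha : a ∈ Sset Γ) (hb : b ∈ Sset Γ)
    (hab : a + b ≤ 1) : a + b ∈ Sset Γ := by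
  obtain ha' | half_le_a := mem_closure_or_half_le_of_mem_Sset hΓ ha
  · exact add_mem_Sset_of_mem_closure hΓ ha' hb hab
  obtain hb' | half_le_b := mem_closure_or_half_le_of_mem_Sset hΓ hb
  · rw [add_comm] at hab ⊢
    exact add_mem_Sset_of_mem_closure hΓ hb' ha hab
  · have hab_eq : a + b = 1 := by linarith
    exact hab_eq ▸ one_mem_Sset

theorem mem_Sset_of_mem_closure_Sset (hΓ : Γ ⊆ Set.Ici 0) {s : ℝ}
    (hs : s ∈ AddSubmonoid.closure (Sset Γ)) (hs1 : s ≤ 1) : s ∈ Sset Γ :=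
  mem_of_mem_addSubmonoidClosure_of_le (Sset_subset_Ici_zero hΓ)
    (mem_Sset_of_mem_closure (zero_mem _) zero_le_one)
    (fun _ ha _ hb => add_mem_Sset hΓ ha hb) hs hs1

end Sset

theorem Sset_idempotent_general (Γ : Set ℝ) (hΓ : Γ ⊆ Set.Ici 0) : Sset (Sset Γ) = Sset Γ := by
  refine Set.Subset.antisymm (fun s hs => ?_) (subset_Sset fun _ => le_one_of_mem_Sset)
  obtain rfl | ⟨m, hm, σ, hσ, hσ1, rfl⟩ := mem_Sset_iff.1 hs
  · exact one_mem_Sset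
  · exact adjunctionCoeff_mem_Sset hm (mem_Sset_of_mem_closure_Sset hΓ hσ hσ1)

/-- For `Γ ⊆ [0,1]`, the operation `Γ ↦ 𝕊(Γ)` is idempotent: `𝕊(𝕊(Γ)) = 𝕊(Γ)`. -/
theorem Sset_idempotent (Γ : Set ℝ) (hΓ : Γ ⊆ Set.Icc (0 : ℝ) 1) :
    Sset (Sset Γ) = Sset Γ := by
  exact Sset_idempotent_general Γ (hΓ.trans Set.Icc_subset_Ici_self)
end

section
/- With X and Y as defined in the context, every nonempty subset of W = {1 + y/(−x) : x ∈ X, y ∈ Y} has a least element; in particular, W contains no infinite strictly decreasing sequence, i.e., W satisfies the descending chain condition (DCC). -/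
/-!
By Dickson's lemma, the integer vectors bounded below by a fixed vector are partially well-ordered,
and monotone maps preserve partial well-ordering. A linear form with nonnegative coefficients is
monotone, so `X` and `Y` are well-ordered; and `(x, y) ↦ 1 + y / (-x)` is monotone for `x < 0 ≤ y`,
so the values it takes on `X × Y` are well-ordered too.
-/

open Set

theorem isPWO_Ici_pi {ι : Type*} [Finite ι] {α : ι → Type*} [∀ i, LinearOrder (α i)]
    [∀ i, LocallyFiniteOrder (α i)] (l : ∀ i, α i) : (Ici l).IsPWO := by
  rw [← pi_univ_Ici]
  exact IsPWO.pi fun _ => isPWO_iff_isWF.mpr bddBelow_Ici.isWF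

theorem monotone_mul_sum_mul {R ι : Type*} [Semiring R] [PartialOrder R] [IsOrderedRing R]
    [Fintype ι] {c : R} (hc : 0 ≤ c) {a : ι → R} (ha : ∀ i, 0 ≤ a i) :
    Monotone fun v : ι → R => c * ∑ i, a i * v i := fun _ _ h =>
  mul_le_mul_of_nonneg_left
    (Finset.sum_le_sum fun i _ => mul_le_mul_of_nonneg_left (h i) (ha i)) hc

section OrderedRing

variable {R ι : Type*} [Ring R] [PartialOrder R] [IsOrderedRing R] [Fintype ι]

theorem isPWO_mul_sum_mul_intCast {c : R} (hc : 0 ≤ c) {a : ι → R} (ha : ∀ i, 0 ≤ a i)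
    (l : ι → ℤ) :
    {x : R | ∃ n : ι → ℤ, (∀ i, l i ≤ n i) ∧ x = c * ∑ i, a i * (n i : R)}.IsPWO := by
  have hmono : Monotone fun n : ι → ℤ => c * ∑ i, a i * (n i : R) := fun _ _ h =>
    monotone_mul_sum_mul hc ha fun i => Int.cast_mono (h i)
  refine ((isPWO_Ici_pi l).image_of_monotone hmono).mono ?_
  rintro x ⟨n, hn, rfl⟩
  exact mem_image_of_mem _ hn

theorem isPWO_mul_sum_mul_natCast {c : R} (hc : 0 ≤ c) {a : ι → R} (ha : ∀ i, 0 ≤ a i) :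
    {y : R | ∃ n : ι → ℕ, y = c * ∑ i, a i * (n i : R)}.IsPWO := by
  refine (isPWO_mul_sum_mul_intCast hc ha 0).mono ?_
  rintro y ⟨n, rfl⟩
  exact ⟨fun i => n i, fun i => Int.natCast_nonneg (n i), by simp only [Int.cast_natCast]⟩

end OrderedRing

section OrderedField

variable {K : Type*} [Field K] [LinearOrder K] [IsStrictOrderedRing K]

theorem monotoneOn_one_add_div_neg :
    MonotoneOn (fun p : K × K => 1 + p.2 / (-p.1)) (Iio 0 ×ˢ Ici 0) := by
  rintro ⟨x, y⟩ - ⟨x', y'⟩ ⟨hx' : x' < 0, hy' : 0 ≤ y'⟩ ⟨hx : x ≤ x', hy : y ≤ y'⟩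
  exact add_le_add_right (div_le_div₀ hy' hy (neg_pos.mpr hx') (neg_le_neg hx)) 1

theorem isPWO_one_add_div_neg {X Y : Set K} (hX : X.IsPWO) (hX_neg : X ⊆ Iio 0)
    (hY : Y.IsPWO) (hY_nonneg : Y ⊆ Ici 0) :
    {w : K | ∃ x ∈ X, ∃ y ∈ Y, w = 1 + y / (-x)}.IsPWO := by
  have hmono : MonotoneOn (fun p : K × K => 1 + p.2 / (-p.1)) (X ×ˢ Y) :=
    monotoneOn_one_add_div_neg.mono (prod_mono hX_neg hY_nonneg)
  refine ((hX.prod hY).image_of_monotoneOn hmono).mono ?_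
  rintro w ⟨x, hx, y, hy, rfl⟩
  exact ⟨(x, y), ⟨hx, hy⟩, rfl⟩

theorem reciprocal_nef_thresholds_wellOrdered_and_DCC_general {ι κ : Type*} [Fintype ι]
    [Fintype κ] {c : K} (hc : 0 ≤ c) {a : ι → K} (ha : ∀ j, 0 ≤ a j) {b : κ → K}
    (hb : ∀ k, 0 ≤ b k) (l : ι → ℤ) :
    let X : Set K := {x | ∃ n : ι → ℤ, (∀ j, l j ≤ n j) ∧ x = c * ∑ j, a j * (n j : K)} ∩ Iio 0
    let Y : Set K := {y | ∃ n : κ → ℕ, y = c * ∑ k, b k * (n k : K)}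
    {w : K | ∃ x ∈ X, ∃ y ∈ Y, w = 1 + y / (-x)}.IsWF := by
  intro X Y
  have hX : X.IsPWO := (isPWO_mul_sum_mul_intCast hc ha l).mono inter_subset_left
  have hY : Y.IsPWO := isPWO_mul_sum_mul_natCast hc hb
  have hY_nonneg : Y ⊆ Ici 0 := by
    rintro y ⟨n, rfl⟩
    exact mul_nonneg hc (Finset.sum_nonneg fun k _ => mul_nonneg (hb k) (n k).cast_nonneg)
  exact (isPWO_one_add_div_neg hX inter_subset_right hY hY_nonneg).isWF

end OrderedField

/-- Numerical core of Lemma 3.10: with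
`X = {(1/m) ∑ a_j n_j : n_j ∈ ℤ, n_j ≥ -2md} ∩ [-2d, 0)` and
`Y = {(1/m) ∑ b_k n_k : n_k ∈ ℕ}`, every nonempty subset of
`W = {1 + y/(-x) : x ∈ X, y ∈ Y}` has a least element; in particular `W` contains no
infinite strictly decreasing sequence (DCC). -/
theorem reciprocal_nef_thresholds_wellOrdered_and_DCC (d m : ℕ) (hd : 0 < d) (hm : 0 < m)
    (s t : ℕ) (a : Fin s → ℝ) (ha : ∀ j, 0 < a j) (b : Fin t → ℝ) (hb : ∀ k, 0 < b k) :
    let X : Set ℝ := {x | ∃ n : Fin s → ℤ, (∀ j, -(2 * (m : ℝ) * (d : ℝ)) ≤ (n j : ℝ)) ∧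
        x = (1 / (m : ℝ)) * ∑ j, a j * (n j : ℝ)} ∩ Set.Ico (-(2 * (d : ℝ))) 0
    let Y : Set ℝ := {y | ∃ n : Fin t → ℕ, y = (1 / (m : ℝ)) * ∑ k, b k * (n k : ℝ)}
    let W : Set ℝ := {w | ∃ x ∈ X, ∃ y ∈ Y, w = 1 + y / (-x)}
    (∀ S : Set ℝ, S ⊆ W → S.Nonempty → ∃ x ∈ S, ∀ y ∈ S, x ≤ y) ∧
    (∀ f : ℕ → ℝ, (∀ i, f i ∈ W) → ¬ StrictAnti f) := by
  intro X Y W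
  have hW : W.IsWF := by
    refine (reciprocal_nef_thresholds_wellOrdered_and_DCC_general (c := 1 / (m : ℝ)) (by positivity)
      (fun j => (ha j).le) (fun k => (hb k).le) fun _ => -(2 * m * d)).mono ?_
    rintro w ⟨x, ⟨⟨n, hn, hx⟩, hx_mem⟩, y, hy, hw⟩
    exact ⟨x, ⟨⟨n, fun j => by exact_mod_cast hn j, hx⟩, hx_mem.2⟩, y, hy, hw⟩
  refine ⟨fun S hS hne => ?_, fun f hf hanti => ?_⟩
  · exact ⟨(hW.mono hS).min hne, IsWF.min_mem _ hne, fun y hy => IsWF.min_le _ hne hy⟩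
  · exact isWF_iff_no_descending_seq.mp hW f hanti hf
end

section
/- Under the hypotheses in the context, the set N_T = {x ∈ P : φ_t(x) ≥ 0 for every t ∈ T} is a rational polytope, i.e., there exists a finite set of points of ℚ^d whose convex hull in ℝ^d equals N_T. -/
/-!
Writing the points of `P` as `∑ j, w j • v j` exhibits `N_T` as a linear image of the slice
`∑ j, w j = 1` of the cone of weights `w ≥ 0` with `0 ≤ ∑ j, w j * φ t (v j)` for all `t`. The
vectors `(φ t (v j))_j` form a well-partially-ordered set, so by Dickson's lemma finitely many of
them lie below all the others, and the corresponding `t` already cut out the cone. Cutting a cone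
with generators `A` by a half-space `0 ≤ ψ` leaves the cone generated by the `a ∈ A` with
`0 ≤ ψ a` and by the vectors `ψ a • b - ψ b • a` on the hyperplane `ψ = 0` with `ψ b < 0 ≤ ψ a`
(the double description method), which are rational if `ψ` and `A` are.
-/

open PointedCone Set

section ConicalHull

lemma smul_sub_smul_mem_of_mem_hull {R E : Type*} [CommRing R] [PartialOrder R] [IsOrderedRing R]
    [AddCommGroup E] [Module R E] {A B : Set E} {ψ : E →ₗ[R] R} {C : PointedCone R E}
    (h : ∀ a ∈ A, ∀ b ∈ B, ψ a • b - ψ b • a ∈ C) {x y : E}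
    (hx : x ∈ hull R A) (hy : y ∈ hull R B) : ψ x • y - ψ y • x ∈ C := by
  have hA : ∀ a ∈ A, ψ a • y - ψ y • a ∈ C := fun a ha => by
    have : hull R B ≤ C.comap (ψ a • LinearMap.id - ψ.smulRight a) :=
      Submodule.span_le.2 fun b hb => by simpa using h a ha b hb
    simpa using this hy
  have : hull R A ≤ C.comap (ψ.smulRight y - ψ y • LinearMap.id) :=
    Submodule.span_le.2 fun a ha => by simpa using hA a ha
  simpa using this hx

variable {𝕜 E : Type*} [Field 𝕜] [LinearOrder 𝕜] [IsStrictOrderedRing 𝕜]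
  [AddCommGroup E] [Module 𝕜 E]

lemma eq_zero_or_inv_smul_mem_of_mem_hull {A S : Set E} {ℓ : E →ₗ[𝕜] 𝕜} (hS : Convex 𝕜 S)
    (hℓ : ∀ a ∈ A, 0 < ℓ a) (hA : ∀ a ∈ A, (ℓ a)⁻¹ • a ∈ S) {x : E} (hx : x ∈ hull 𝕜 A) :
    x = 0 ∨ 0 < ℓ x ∧ (ℓ x)⁻¹ • x ∈ S := by
  induction hx using Submodule.span_induction with
  | mem a ha => exact .inr ⟨hℓ a ha, hA a ha⟩
  | zero => exact .inl rfl
  | add x y _ _ hx hy =>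
    obtain rfl | ⟨hx, hxS⟩ := hx
    · simpa using hy
    obtain rfl | ⟨hy, hyS⟩ := hy
    · simpa using Or.inr ⟨hx, hxS⟩
    have hxy : 0 < ℓ x + ℓ y := add_pos hx hy
    refine .inr ⟨by rwa [map_add], ?_⟩
    convert hS hxS hyS (div_nonneg hx.le hxy.le) (div_nonneg hy.le hxy.le)
      (by rw [← add_div, div_self hxy.ne']) using 1
    rw [map_add]
    match_scalars <;> field_simp
  | smul r x _ hx =>
    obtain rfl | ⟨hx, hxS⟩ := hx
    · simp
    obtain ⟨r, hr⟩ := r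
    rw [Nonneg.mk_smul, map_smul, smul_eq_mul]
    obtain rfl | hr := hr.eq_or_lt
    · simp
    have hscale : (r * ℓ x)⁻¹ • r • x = (ℓ x)⁻¹ • x := by
      match_scalars
      field_simp
    exact .inr ⟨mul_pos hr hx, hscale ▸ hxS⟩

lemma setOf_mem_hull_and_eq_one_eq_convexHull {A : Set E} {ℓ : E →ₗ[𝕜] 𝕜}
    (hℓ : ∀ a ∈ A, 0 < ℓ a) :
    {x | x ∈ hull 𝕜 A ∧ ℓ x = 1} = convexHull 𝕜 ((fun a => (ℓ a)⁻¹ • a) '' A) := by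
  refine Subset.antisymm (fun x ⟨hx, hx1⟩ => ?_) (convexHull_min ?_ ?_)
  · obtain rfl | ⟨-, hxS⟩ := eq_zero_or_inv_smul_mem_of_mem_hull (convex_convexHull 𝕜 _) hℓ
      (fun a ha => subset_convexHull 𝕜 _ (mem_image_of_mem _ ha)) hx
    · simp at hx1
    · simpa [hx1] using hxS
  · rintro _ ⟨a, ha, rfl⟩
    exact ⟨(hull 𝕜 A).smul_mem (inv_nonneg.2 (hℓ a ha).le) (subset_hull ha),
      by simp [(hℓ a ha).ne']⟩
  · exact (hull 𝕜 A).convex.inter ((convex_singleton (1 : 𝕜)).linear_preimage ℓ)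

lemma add_mem_of_smul_sub_smul_mem {C : PointedCone 𝕜 E} {ψ : E →ₗ[𝕜] 𝕜} {a b : E} (ha : a ∈ C)
    (hψa : 0 < ψ a) (hab : ψ a • b - ψ b • a ∈ C) (hψ : 0 ≤ ψ (a + b)) : a + b ∈ C := by
  rw [map_add] at hψ
  have : a + b = ((ψ a + ψ b) / ψ a) • a + (ψ a)⁻¹ • (ψ a • b - ψ b • a) := by
    match_scalars <;> field_simp
    ring
  rw [this]
  exact C.add_mem (C.smul_mem (div_nonneg hψ hψa.le) ha) (C.smul_mem (inv_nonneg.2 hψa.le) hab)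

lemma hull_inf_comap_positive (A : Set E) (ψ : E →ₗ[𝕜] 𝕜) :
    hull 𝕜 A ⊓ (positive 𝕜 𝕜).comap ψ = hull 𝕜 ({a ∈ A | 0 ≤ ψ a} ∪
      image2 (fun a b => ψ a • b - ψ b • a) {a ∈ A | 0 ≤ ψ a} {b ∈ A | ψ b < 0}) := by
  set A₁ := {a ∈ A | 0 ≤ ψ a}
  set A₂ := {b ∈ A | ψ b < 0}
  set C := hull 𝕜 (A₁ ∪ image2 (fun a b => ψ a • b - ψ b • a) A₁ A₂)
  apply le_antisymm
  · rintro x ⟨hx, hψx : 0 ≤ ψ x⟩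
    have hA : A = A₁ ∪ A₂ := by
      ext a
      simp [A₁, A₂, ← and_or_left, le_or_gt]
    rw [hA, hull, Submodule.span_union] at hx
    obtain ⟨a, ha, b, hb, rfl⟩ := Submodule.mem_sup.1 hx
    have haC : a ∈ C := Submodule.span_mono subset_union_left ha
    obtain rfl | ⟨hψb, -⟩ := eq_zero_or_inv_smul_mem_of_mem_hull (ℓ := -ψ) convex_univ
      (fun b hb => neg_pos.2 hb.2) (fun _ _ => mem_univ _) hb
    · simpa using haC
    rw [LinearMap.neg_apply] at hψb
    have hψa : 0 < ψ a := by linarith [map_add ψ a b]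
    exact add_mem_of_smul_sub_smul_mem haC hψa (smul_sub_smul_mem_of_mem_hull
      (fun a ha b hb => subset_hull (.inr (mem_image2_of_mem ha hb))) ha hb) hψx
  · refine Submodule.span_le.2 (union_subset (fun a ha => ⟨subset_hull ha.1, ha.2⟩) ?_)
    rintro _ ⟨a, ha, b, hb, rfl⟩
    have hcone : ψ a • b + -ψ b • a ∈ hull 𝕜 A :=
      (hull 𝕜 A).add_mem ((hull 𝕜 A).smul_mem ha.2 (subset_hull hb.1))
        ((hull 𝕜 A).smul_mem (neg_nonneg.2 hb.2.le) (subset_hull ha.1))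
    have hker : ψ (ψ a • b - ψ b • a) = 0 := by simp [mul_comm]
    exact ⟨by simpa [sub_eq_add_neg] using hcone, hker.ge⟩

end ConicalHull

section ConvexCombination

lemma affineMap_linearCombination {𝕜 E F J : Type*} [CommRing 𝕜] [AddCommGroup E] [Module 𝕜 E]
    [AddCommGroup F] [Module 𝕜 F] [Fintype J] (φ : E →ᵃ[𝕜] F) (v : J → E) {w : J → 𝕜}
    (hw : ∑ j, w j = 1) :
    φ (Fintype.linearCombination 𝕜 v w) = Fintype.linearCombination 𝕜 (φ ∘ v) w := by
  have := Finset.univ.map_affineCombination v w hw φ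
  rwa [Finset.affineCombination_eq_linear_combination _ _ _ hw,
    Finset.affineCombination_eq_linear_combination _ _ _ hw] at this

variable {𝕜 E J T : Type*} [Field 𝕜] [LinearOrder 𝕜] [IsStrictOrderedRing 𝕜]
  [AddCommGroup E] [Module 𝕜 E] [Fintype J]

lemma convexHull_range_eq_image_stdSimplex (v : J → E) :
    convexHull 𝕜 (range v) = Fintype.linearCombination 𝕜 v '' stdSimplex 𝕜 J := by
  classical
  rw [← convexHull_rangle_single_eq_stdSimplex, LinearMap.image_convexHull, ← range_comp]
  simp [Function.comp_def, Fintype.linearCombination_apply_single]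

lemma setOf_mem_convexHull_range_and_nonneg_eq_image (v : J → E) (φ : T → E →ᵃ[𝕜] 𝕜) :
    {x ∈ convexHull 𝕜 (range v) | ∀ t, 0 ≤ φ t x} = Fintype.linearCombination 𝕜 v ''
      {w ∈ stdSimplex 𝕜 J | ∀ t, 0 ≤ Fintype.linearCombination 𝕜 (φ t ∘ v) w} := by
  rw [convexHull_range_eq_image_stdSimplex]
  ext x
  constructor
  · rintro ⟨⟨w, hw, rfl⟩, h⟩
    exact ⟨w, ⟨hw, fun t => affineMap_linearCombination (φ t) v hw.2 ▸ h t⟩, rfl⟩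
  · rintro ⟨w, ⟨hw, h⟩, rfl⟩
    exact ⟨mem_image_of_mem _ hw, fun t => (affineMap_linearCombination (φ t) v hw.2).symm ▸ h t⟩

end ConvexCombination

section PartialWellOrder

lemma exists_finite_forall_exists_le_of_isPWO {T α : Type*} [Preorder α] {g : T → α}
    (hg : (range g).IsPWO) : ∃ s : Set T, s.Finite ∧ ∀ t, ∃ i ∈ s, g i ≤ g t := by
  by_contra! h
  obtain ⟨f, -, hf⟩ := exists_seq_of_forall_finset_exists (fun _ => True) (fun i t => ¬ g i ≤ g t)
    fun s _ => by simpa using h s s.finite_toSet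
  obtain ⟨m, n, hmn, hle⟩ := hg fun n => ⟨g (f n), mem_range_self _⟩
  exact hf m n hmn hle

lemma exists_finite_forall_linearCombination_nonneg_iff {R J T : Type*} [Semiring R]
    [PartialOrder R] [IsOrderedRing R] [Fintype J] {c : T → J → R} (hc : (range c).IsPWO) :
    ∃ s : Set T, s.Finite ∧ ∀ w : J → R, 0 ≤ w →
      ((∀ t ∈ s, 0 ≤ Fintype.linearCombination R (c t) w) ↔
        ∀ t, 0 ≤ Fintype.linearCombination R (c t) w) := by
  obtain ⟨s, hs, hle⟩ := exists_finite_forall_exists_le_of_isPWO hc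
  refine ⟨s, hs, fun w hw => ⟨fun h t => ?_, fun h t _ => h t⟩⟩
  obtain ⟨i, hi, hit⟩ := hle t
  exact (h i hi).trans
    (Finset.sum_le_sum fun j _ => mul_le_mul_of_nonneg_left (hit j) (hw j))

lemma isPWO_of_bddBelow_of_mul_mem_int {𝕜 : Type*} [Field 𝕜] [LinearOrder 𝕜]
    [IsStrictOrderedRing 𝕜] [Archimedean 𝕜] {S : Set 𝕜} {m : 𝕜} (hm : 0 < m) (hS : BddBelow S)
    (hmS : ∀ x ∈ S, ∃ z : ℤ, m * x = z) : S.IsPWO := by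
  obtain ⟨b, hb⟩ := hS
  obtain ⟨k, hk⟩ := exists_int_lt (m * b)
  have hmono : Monotone fun z : ℤ => (z : 𝕜) / m := fun _ _ h => by dsimp only; gcongr
  refine ((bddBelow_Ici (a := k)).isWF.isPWO.image_of_monotone hmono).mono fun x hx => ?_
  obtain ⟨z, hz⟩ := hmS x hx
  refine ⟨z, ?_, by simp [← hz, hm.ne']⟩
  have : (k : 𝕜) < z := hz ▸ hk.trans_le (mul_le_mul_of_nonneg_left (hb hx) hm.le)
  exact_mod_cast this.le

end PartialWellOrder

section Rational

variable {𝕜 E F J T : Type*} [Field 𝕜] [AddCommGroup E] [Module 𝕜 E] [AddCommGroup F] [Module 𝕜 F]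
  {K : Subfield 𝕜} {Λ : Submodule K E}

/-- The points of `ι → 𝕜` all of whose coordinates lie in `K`, as a `K`-subspace; this is the
notion of rational point of the coordinate space, with `K = ℚ` in the classical case. -/
def rationalPoints (K : Subfield 𝕜) (ι : Type*) : Submodule K (ι → 𝕜) where
  carrier := {x | ∀ i, x i ∈ K}
  add_mem' hx hy i := K.add_mem (hx i) (hy i)
  zero_mem' _ := K.zero_mem
  smul_mem' c _ hx i := K.mul_mem c.2 (hx i)

lemma mapsTo_linearCombination_rationalPoints [Fintype J] {v : J → E} (hv : ∀ j, v j ∈ Λ) :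
    MapsTo (Fintype.linearCombination 𝕜 v) (rationalPoints K J) Λ := fun w hw => by
  rw [Fintype.linearCombination_apply]
  exact Λ.sum_mem fun j _ => Λ.smul_mem ⟨w j, hw j⟩ (hv j)

lemma mapsTo_linearCombination_subfield [Fintype J] {c : J → 𝕜} (hc : ∀ j, c j ∈ K) :
    MapsTo (Fintype.linearCombination 𝕜 c) (rationalPoints K J) K := fun w hw => by
  rw [Fintype.linearCombination_apply]
  exact K.sum_mem fun j _ => K.mul_mem (hw j) (hc j)

variable [LinearOrder 𝕜]

/-- A rational polytope: the convex hull of finitely many points of `Λ`, the `K`-subspace of points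
of `E` that are regarded as rational (such as `ℚ^d` in `ℝ^d`). -/
def IsRationalPolytope (Λ : Submodule K E) (P : Set E) : Prop :=
  ∃ A : Set E, A.Finite ∧ A ⊆ Λ ∧ P = convexHull 𝕜 A

lemma IsRationalPolytope.image {P : Set E} (hP : IsRationalPolytope Λ P) {Λ' : Submodule K F}
    {f : E →ₗ[𝕜] F} (hf : MapsTo f Λ Λ') : IsRationalPolytope Λ' (f '' P) := by
  obtain ⟨A, hfin, hA, rfl⟩ := hP
  exact ⟨f '' A, hfin.image f, (hf.mono_left hA).image_subset, f.image_convexHull A⟩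

lemma IsRationalPolytope.exists_fin {k ι : Type*} [Field k] {f : k →+* 𝕜} {P : Set (ι → 𝕜)}
    (hP : IsRationalPolytope (rationalPoints f.fieldRange ι) P) :
    ∃ (r : ℕ) (q : Fin r → ι → k), P = convexHull 𝕜 (range fun i j => f (q i j)) := by
  obtain ⟨A, hfin, hA, rfl⟩ := hP
  obtain ⟨r, x, -, rfl⟩ := hfin.fin_param
  choose q hq using fun i => hA (mem_range_self i)
  exact ⟨r, q, by simp only [hq]⟩

variable [IsStrictOrderedRing 𝕜] {C : PointedCone 𝕜 E}

/-- A rational polyhedral cone: a cone generated by finitely many vectors of `Λ`, the `K`-subspace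
of vectors of `E` that are regarded as rational (such as `ℚ^d` in `ℝ^d`). -/
def IsRationalCone (Λ : Submodule K E) (C : PointedCone 𝕜 E) : Prop :=
  ∃ A : Set E, A.Finite ∧ A ⊆ Λ ∧ C = hull 𝕜 A

lemma IsRationalCone.inf_comap_positive (hC : IsRationalCone Λ C) {ψ : E →ₗ[𝕜] 𝕜}
    (hψ : MapsTo ψ Λ K) : IsRationalCone Λ (C ⊓ (positive 𝕜 𝕜).comap ψ) := by
  obtain ⟨A, hfin, hA, rfl⟩ := hC
  refine ⟨_, ?_, ?_, hull_inf_comap_positive A ψ⟩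
  · exact (hfin.sep _).union ((hfin.sep _).image2 _ (hfin.sep _))
  · have hsmul : ∀ a ∈ A, ∀ b ∈ A, ψ a • b ∈ Λ := fun a ha b hb =>
      Λ.smul_mem ⟨ψ a, hψ (hA ha)⟩ (hA hb)
    refine union_subset (fun a ha => hA ha.1) ?_
    rintro _ ⟨a, ha, b, hb, rfl⟩
    exact Λ.sub_mem (hsmul a ha.1 b hb.1) (hsmul b hb.1 a ha.1)

lemma IsRationalCone.inf_biInf_comap_positive (hC : IsRationalCone Λ C) {s : Set T}
    (hs : s.Finite) {ψ : T → E →ₗ[𝕜] 𝕜} (hψ : ∀ t ∈ s, MapsTo (ψ t) Λ K) :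
    IsRationalCone Λ (C ⊓ ⨅ t ∈ s, (positive 𝕜 𝕜).comap (ψ t)) := by
  induction s, hs using Set.Finite.induction_on with
  | empty => simpa using hC
  | @insert t s _ _ ih =>
    rw [iInf_insert, inf_left_comm, inf_comm]
    exact (ih fun i hi => hψ i (mem_insert_of_mem t hi)).inf_comap_positive
      (hψ t (mem_insert t s))

lemma IsRationalCone.isRationalPolytope_slice (hC : IsRationalCone Λ C) {ℓ : E →ₗ[𝕜] 𝕜}
    (hℓ : MapsTo ℓ Λ K) (hpos : ∀ x ∈ C, x ≠ 0 → 0 < ℓ x) :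
    IsRationalPolytope Λ {x | x ∈ C ∧ ℓ x = 1} := by
  obtain ⟨A, hfin, hA, rfl⟩ := hC
  refine ⟨(fun a => (ℓ a)⁻¹ • a) '' (A \ {0}), hfin.sdiff.image _, ?_, ?_⟩
  · rintro _ ⟨a, ha, rfl⟩
    exact Λ.smul_mem ⟨(ℓ a)⁻¹, K.inv_mem (hℓ (hA ha.1))⟩ (hA ha.1)
  · rw [← setOf_mem_hull_and_eq_one_eq_convexHull fun a ha => hpos a (subset_hull ha.1) ha.2,
      hull, hull, Submodule.span_sdiff_singleton_zero]

lemma isRationalCone_positive [Finite J] :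
    IsRationalCone (rationalPoints K J) (positive 𝕜 (J → 𝕜)) := by
  classical
  refine ⟨range fun j => Pi.single j 1, finite_range _, ?_, le_antisymm ?_ ?_⟩
  · rintro _ ⟨j, rfl⟩ k
    obtain rfl | hk := eq_or_ne k j
    · simp
    · simp [hk]
  · intro w hw
    have := Fintype.ofFinite J
    rw [pi_eq_sum_univ' w]
    exact sum_mem fun j _ => (hull 𝕜 _).smul_mem (hw j) (subset_hull (mem_range_self j))
  · exact Submodule.span_le.2 (range_subset_iff.2 fun j => by simp)

lemma isRationalPolytope_setOf_stdSimplex_nonneg [Fintype J] {c : T → J → 𝕜}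
    (hc : ∀ t j, c t j ∈ K) (hpwo : (range c).IsPWO) :
    IsRationalPolytope (rationalPoints K J)
      {w ∈ stdSimplex 𝕜 J | ∀ t, 0 ≤ Fintype.linearCombination 𝕜 (c t) w} := by
  obtain ⟨s, hs, hcut⟩ := exists_finite_forall_linearCombination_nonneg_iff hpwo
  have hC : IsRationalCone (rationalPoints K J) (positive 𝕜 (J → 𝕜) ⊓
      ⨅ t ∈ s, (positive 𝕜 𝕜).comap (Fintype.linearCombination 𝕜 (c t))) :=
    isRationalCone_positive.inf_biInf_comap_positive hs
      fun t _ => mapsTo_linearCombination_subfield (hc t)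
  have hsum (w : J → 𝕜) : Fintype.linearCombination 𝕜 (fun _ => (1 : 𝕜)) w = ∑ j, w j := by
    simp [Fintype.linearCombination_apply]
  have hslice := hC.isRationalPolytope_slice
    (mapsTo_linearCombination_subfield fun _ => K.one_mem)
    fun w hw hw0 => by simpa only [hsum] using Fintype.sum_pos (lt_of_le_of_ne hw.1 hw0.symm)
  convert hslice using 1
  ext w
  simp only [stdSimplex, hsum, mem_ofPred_eq, Submodule.mem_inf, Submodule.mem_iInf, mem_comap,
    mem_positive]
  rw [and_right_comm]
  exact and_congr_left fun _ => and_congr_right fun hw => (hcut w hw).symm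

theorem NT_is_rational_polytope_general [Finite J] {v : J → E} (hv : ∀ j, v j ∈ Λ)
    {φ : T → E →ᵃ[𝕜] 𝕜} (hφ : ∀ t j, φ t (v j) ∈ K)
    (hpwo : ∀ j, (range fun t => φ t (v j)).IsPWO) :
    IsRationalPolytope Λ {x ∈ convexHull 𝕜 (range v) | ∀ t, 0 ≤ φ t x} := by
  have := Fintype.ofFinite J
  have hpwo' : (range fun t => φ t ∘ v).IsPWO :=
    (IsPWO.pi hpwo).mono (range_subset_iff.2 fun t j _ => mem_range_self t)
  rw [setOf_mem_convexHull_range_and_nonneg_eq_image]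
  exact (isRationalPolytope_setOf_stdSimplex_nonneg hφ hpwo').image
    (mapsTo_linearCombination_rationalPoints hv)

end Rational

/-- Abstract Shokurov polytope statement (Proposition 3.11): let `P` be the convex hull of
rational points `v_1, …, v_p` in `ℝ^d`, and let `φ_t` (`t ∈ T`) be affine maps `ℝ^d → ℝ`
with `φ_t(v_j) ≥ -n` and `m · φ_t(v_j) ∈ ℤ` for all `t, j`. Then
`N_T = {x ∈ P | φ_t(x) ≥ 0 ∀ t}` is a rational polytope. -/
theorem NT_is_rational_polytope (d m n p : ℕ) (hm : 0 < m) (hn : 0 < n)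
    (v : Fin p → Fin d → ℚ)
    (P : Set (Fin d → ℝ)) (hP : P = convexHull ℝ (Set.range fun j => fun k => ((v j k : ℝ))))
    (T : Type*) (φ : T → ((Fin d → ℝ) →ᵃ[ℝ] ℝ))
    (hlow : ∀ t j, -(n : ℝ) ≤ φ t (fun k => ((v j k : ℝ))))
    (hint : ∀ t j, ∃ z : ℤ, (m : ℝ) * φ t (fun k => ((v j k : ℝ))) = (z : ℝ)) :
    ∃ (r : ℕ) (q : Fin r → Fin d → ℚ),
      {x ∈ P | ∀ t, 0 ≤ φ t x} =
        convexHull ℝ (Set.range fun i => fun k => ((q i k : ℝ))) := by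
  subst hP
  have hm' : (0 : ℝ) < m := Nat.cast_pos.2 hm
  refine (NT_is_rational_polytope_general (K := (Rat.castHom ℝ).fieldRange)
    (fun j k => ⟨v j k, rfl⟩) (fun t j => ?_) fun j => ?_).exists_fin
  · obtain ⟨z, hz⟩ := hint t j
    exact ⟨z / m, by simp [← hz, hm'.ne']⟩
  · exact isPWO_of_bddBelow_of_mul_mem_int hm' ⟨-n, forall_mem_range.2 (hlow · j)⟩
      (forall_mem_range.2 (hint · j))
end

section
/- Under the hypotheses in the context, for every point x ∈ P there exists a real number α > 0 such that for every t ∈ T, if φ_t(x) > 0 then φ_t(x) > α. -/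
/-!
Call a point `x` good if the values `φ t x`, `t ∈ T`, satisfy the descending chain condition. For
affine `φ t` the good points form a convex set, since sums of well-ordered sets are well-ordered.
The vertices are good, because their values lie in `(1 / m) ℤ` and are bounded below; hence so is
every point of the polytope. Finally, a well-ordered set has a gap above `0`.
-/

open Set
open scoped Pointwise

theorem exists_gt_forall_lt_of_isWF {α : Type*} [LinearOrder α] [DenselyOrdered α] [NoMaxOrder α]
    {s : Set α} (hs : s.IsWF) (c : α) : ∃ b > c, ∀ y ∈ s, c < y → b < y := by
  rcases (s ∩ Ioi c).eq_empty_or_nonempty with hempty | hne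
  · obtain ⟨b, hcb⟩ := exists_gt c
    exact ⟨b, hcb, fun y hy hcy => (hempty.subset ⟨hy, hcy⟩).elim⟩
  · have hwf : (s ∩ Ioi c).IsWF := hs.mono inter_subset_left
    have hcmin : c < hwf.min hne := (hwf.min_mem hne).2
    obtain ⟨b, hcb, hbmin⟩ := exists_between hcmin
    exact ⟨b, hcb, fun y hy hcy => hbmin.trans_le (hwf.min_le hne ⟨hy, hcy⟩)⟩

theorem isPWO_of_bddBelow_of_mul_eq_intCast {𝕜 : Type*} [Field 𝕜] [LinearOrder 𝕜]
    [IsStrictOrderedRing 𝕜] [Archimedean 𝕜] {m : 𝕜} (hm : 0 < m) {s : Set 𝕜} (hs : BddBelow s)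
    (hint : ∀ y ∈ s, ∃ z : ℤ, m * y = z) : s.IsPWO := by
  obtain ⟨c, hc⟩ := hs
  obtain ⟨k, hk⟩ := exists_int_lt (m * c)
  have hpwo : (Ici k).IsPWO := bddBelow_Ici.isWF.isPWO
  have hmono : Monotone fun z : ℤ => (z : 𝕜) / m := Int.cast_mono.div_const hm.le
  refine (hpwo.image_of_monotone hmono).mono fun y hy => ?_
  obtain ⟨z, hz⟩ := hint y hy
  have hkz : (k : 𝕜) ≤ z := hk.le.trans (hz ▸ mul_le_mul_of_nonneg_left (hc hy) hm.le)
  exact ⟨z, Int.cast_le.mp hkz, (eq_div_of_mul_eq hm.ne' (mul_comm m y ▸ hz)).symm⟩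

theorem convex_setOf_isPWO_range {𝕜 E F T : Type*} [Ring 𝕜] [PartialOrder 𝕜] [AddCommGroup E]
    [Module 𝕜 E] [AddCommGroup F] [PartialOrder F] [IsOrderedAddMonoid F] [Module 𝕜 F]
    [PosSMulMono 𝕜 F] (φ : T → E →ᵃ[𝕜] F) : Convex 𝕜 {x | (range fun t => φ t x).IsPWO} := by
  intro x hx y hy a b ha hb hab
  have hax : (a • range fun t => φ t x).IsPWO :=
    hx.image_of_monotone (monotone_smul_left_of_nonneg ha)
  have hby : (b • range fun t => φ t y).IsPWO :=
    hy.image_of_monotone (monotone_smul_left_of_nonneg hb)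
  refine (hax.add hby).mono (range_subset_iff.mpr fun t => ?_)
  rw [Convex.combo_affine_apply hab]
  exact add_mem_add (smul_mem_smul_set (mem_range_self t)) (smul_mem_smul_set (mem_range_self t))

theorem exists_pos_lower_bound_on_polytope_general {𝕜 E T : Type*} [Field 𝕜] [LinearOrder 𝕜]
    [IsStrictOrderedRing 𝕜] [AddCommGroup E] [Module 𝕜 E] {S : Set E} {φ : T → E →ᵃ[𝕜] 𝕜}
    (hS : ∀ v ∈ S, (range fun t => φ t v).IsPWO) :
    ∀ x ∈ convexHull 𝕜 S, ∃ α : 𝕜, 0 < α ∧ ∀ t, 0 < φ t x → α < φ t x := by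
  intro x hx
  have hpwo : (range fun t => φ t x).IsPWO := convexHull_min hS (convex_setOf_isPWO_range φ) hx
  obtain ⟨α, hα, hgap⟩ := exists_gt_forall_lt_of_isWF hpwo.isWF 0
  exact ⟨α, hα, forall_mem_range.mp hgap⟩

/-- Abstract Lemma 3.8(1): let `P` be the convex hull of rational points `v_1, …, v_p`
in `ℝ^d`, and let `φ_t` (`t ∈ T`) be affine maps `ℝ^d → ℝ` with `φ_t(v_j) ≥ -n` and
`m · φ_t(v_j) ∈ ℤ` for all `t, j`. Then for every `x ∈ P` there is `α > 0` such that
`φ_t(x) > 0` implies `φ_t(x) > α`. -/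
theorem exists_pos_lower_bound_on_polytope (d m n p : ℕ) (hm : 0 < m) (hn : 0 < n)
    (v : Fin p → Fin d → ℚ)
    (P : Set (Fin d → ℝ)) (hP : P = convexHull ℝ (Set.range fun j => fun k => ((v j k : ℝ))))
    (T : Type*) (φ : T → ((Fin d → ℝ) →ᵃ[ℝ] ℝ))
    (hlow : ∀ t j, -(n : ℝ) ≤ φ t (fun k => ((v j k : ℝ))))
    (hint : ∀ t j, ∃ z : ℤ, (m : ℝ) * φ t (fun k => ((v j k : ℝ))) = (z : ℝ)) :
    ∀ x ∈ P, ∃ α : ℝ, 0 < α ∧ ∀ t, 0 < φ t x → α < φ t x := by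
  rw [hP]
  exact exists_pos_lower_bound_on_polytope_general <| forall_mem_range.mpr fun j =>
    isPWO_of_bddBelow_of_mul_eq_intCast (Nat.cast_pos.mpr hm)
      ⟨-n, forall_mem_range.mpr (hlow · j)⟩ (forall_mem_range.mpr (hint · j))
end
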